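/- Let M be a rank r matroid with k connected components, no loops, and r - k ≥ 2. Then for all 2 ≤ i ≤ r-k, b_{i+k-1}(M) ≤ C(r-k-1, i-1)·b_k(M) + C(r-k-1, i-2), where b_j(M) are the coefficients of T(M;x,0). -/

import Mathlib

/-!
The bound says that `T(M; x, 0) / x ^ k` is coefficientwise at most `(x + β) (1 + x) ^ (r - k - 1)`,
where `β = b_k(M)` is the product of the beta invariants of the components. Such bounds multiply
along direct sums (`good_mul`), because `(x + β) (x + γ) ≤ (x + β γ) (1 + x)` for `β, γ ≥ 1`, so
the main point is a connected matroid `M`. This is handled by induction on the number of elements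
(`good_tp`), choosing an arbitrary element `e`.

* If `e` has a parallel element, deleting `e` changes neither `T(M; x, 0)` nor connectedness.
* If `M / e` is disconnected, `M` is a parallel connection at `e`, and `T(M; x, 0) / x` is the
  product of the same quantities for the two parts (`tp_par`). This follows from the expression of
  `T(M; x, 0) / x` as a sum over the sets whose closure avoids `e` (`tp_eq_X_mul`).
* If `M / e` and `M \ e` are connected, add the two inductive bounds (`good_add`).
* If `M / e` is connected and `M \ e` is not, then `b_1(M) = b_1(M / e)`, and adding the two bounds
  suffices (`good_series`) provided that the product of the beta invariants of the components of
  `M \ e` is at most `b_1(M)`. This is `lead_del_le`, an induction using that `M` is a series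
  connection at `e`, for which the beta invariant is multiplicative (`beta_series`).

Minors are encoded by rank functions on finite sets, up to an additive constant (`IsRk`), together
with a ground set: restriction shrinks the ground set, and contraction of `C` replaces `ρ` by
`A ↦ ρ (A ∪ C)`.
-/

open Polynomial

variable {α : Type*}

/-- The rank of a set `A` in a matroid `M`: the largest cardinality of an independent
subset of `A`. -/
noncomputable def mr (M : Matroid α) (A : Set α) : ℕ :=
  sSup {n | ∃ I, M.Indep I ∧ I ⊆ A ∧ I.ncard = n}

/-- `mf M j` is the number of independent sets of `M` of cardinality `j`, i.e. the
number of faces of cardinality `j` of the independence complex of `M`. -/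
noncomputable def mf (M : Matroid α) (j : ℕ) : ℕ :=
  {I : Set α | M.Indep I ∧ I.ncard = j}.ncard

/-- The `h`-vector of the independence complex of a rank-`r` matroid `M`:
`h_i = ∑_{j=0}^i (-1)^{i-j} C(r-j, r-i) f_j`. -/
noncomputable def mh (M : Matroid α) (r i : ℕ) : ℤ :=
  ∑ j ∈ Finset.range (i + 1), (-1 : ℤ) ^ (i - j) * ((r - j).choose (r - i) : ℤ) * (mf M j : ℤ)

/-- Binomial coefficient `C(a,b)` for integers, with the convention that it is `0`
whenever `b < 0` or `b > a`. -/
def ch (a b : ℤ) : ℤ := if 0 ≤ b ∧ b ≤ a then (a.toNat.choose b.toNat : ℤ) else 0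

/-- `e` is a loop of `M`. -/
def mLoop (M : Matroid α) (e : α) : Prop := e ∈ M.closure ∅

/-- `e` is a coloop of `M`, i.e. a loop of the dual matroid. -/
def mColoop (M : Matroid α) (e : α) : Prop := e ∈ M✶.closure ∅

/-- `M` is connected: it is not the direct sum of two smaller matroids; equivalently,
`r(A) + r(E \ A) ≠ r(E)` for every proper nonempty subset `A` of the ground set. -/
def mConnected (M : Matroid α) : Prop :=
  M.E.Nonempty ∧ ∀ A ⊆ M.E, A.Nonempty → (M.E \ A).Nonempty →
    mr M A + mr M (M.E \ A) ≠ mr M M.E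

/-- The deletion `M - D`. -/
noncomputable def mdel (M : Matroid α) (D : Set α) : Matroid α := M.restrict (M.E \ D)

/-- The contraction `M / C`, defined as the dual of the deletion of `C` in the dual. -/
noncomputable def mcon (M : Matroid α) (C : Set α) : Matroid α := (mdel M✶ C)✶

/-- `P` is a parallel class of `M`: the set of all non-loop elements parallel to some
fixed non-loop element `e`. -/
def mParClass (M : Matroid α) (P : Set α) : Prop :=
  ∃ e ∈ M.E, ¬ mLoop M e ∧ P = {f | f ∈ M.E ∧ ¬ mLoop M f ∧ f ∈ M.closure {e}}

/-- `S` is a series class of `M`: a parallel class of the dual matroid. -/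
def mSerClass (M : Matroid α) (S : Set α) : Prop := mParClass M✶ S

/-- `T(M; x, 0)`: the Tutte polynomial of `M` (with ground set the whole fintype)
evaluated at `y = 0`, so that `T(M;x,0) = ∑_i b_i(M) x^i`. -/
noncomputable def bpoly [Fintype α] [DecidableEq α] (M : Matroid α) : Polynomial ℤ :=
  ∑ A : Finset α,
    (X - 1) ^ (mr M Set.univ - mr M (A : Set α)) *
      C ((-1 : ℤ) ^ (A.card - mr M (A : Set α)))

/-- Two elements of the ground set lie in the same connected component iff no
separator (a set `A` with `r(A) + r(E \ A) = r(E)`) splits them. -/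
def crel (M : Matroid α) (e f : α) : Prop :=
  e ∈ M.E ∧ f ∈ M.E ∧
    ∀ A ⊆ M.E, mr M A + mr M (M.E \ A) = mr M M.E → (e ∈ A ↔ f ∈ A)

/-- The number of connected components of `M`. -/
noncomputable def numComponents (M : Matroid α) : ℕ :=
  {S : Set α | ∃ e ∈ M.E, S = {f | crel M e f}}.ncard

/-! ### `T(M; x, 0)` for rank functions -/

/-- Rank functions of matroids up to an additive constant: the value at `∅` is not normalised, so
that contracting `C` is simply the substitution `A ↦ A ∪ C`. -/
structure IsRk [DecidableEq α] (ρ : Finset α → ℕ) : Prop where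
  mono : ∀ A B, A ⊆ B → ρ A ≤ ρ B
  submod : ∀ A B, ρ (A ∪ B) + ρ (A ∩ B) ≤ ρ A + ρ B
  unit : ∀ e A, ρ (insert e A) ≤ ρ A + 1

section Rk

variable [DecidableEq α] {ρ σ : Finset α → ℕ} {E A B S T : Finset α} {e f : α}

lemma IsRk.con (h : IsRk ρ) (D : Finset α) : IsRk (fun A => ρ (A ∪ D)) where
  mono A B hAB := h.mono _ _ (Finset.union_subset_union_left hAB)
  submod A B := by
    have := h.submod (A ∪ D) (B ∪ D)
    rwa [← Finset.union_union_distrib_right, ← Finset.inter_union_distrib_right] at this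
  unit e A := by
    simpa [Finset.insert_union] using h.unit e (A ∪ D)

/-- The building block of the rank generating function at `y = 0`. -/
noncomputable def tm (a m : ℕ) : ℤ[X] := (X - 1) ^ a * (-1) ^ m

lemma tm_mul (a b m n : ℕ) : tm a m * tm b n = tm (a + b) (m + n) := by
  simp only [tm, pow_add]; ring

lemma tm_congr {a b m n : ℕ} (h : a = b) (h' : m % 2 = n % 2) : tm a m = tm b n := by
  subst h
  rw [tm, tm, neg_one_pow_eq_pow_mod_two, h', ← neg_one_pow_eq_pow_mod_two]

lemma tm_cancel {a b m n : ℕ} (h : a = b) (h' : m % 2 = (n + 1) % 2) : tm a m + tm b n = 0 := by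
  rw [tm_congr h h', tm, tm, pow_succ]; ring

lemma tm_X {a b m n : ℕ} (h : a = b + 1) (h' : m % 2 = n % 2) :
    tm a m + tm b n = X * tm b n := by
  rw [tm_congr h h', tm, tm, pow_succ]; ring

/-- The polynomial `T(M; x, 0)` of the matroid with ground set `E` and rank function `ρ - ρ ∅`. -/
noncomputable def tp (ρ : Finset α → ℕ) (E : Finset α) : ℤ[X] :=
  ∑ A ∈ E.powerset, tm (ρ E - ρ A) (A.card + ρ A + ρ ∅)

lemma tp_empty : tp ρ ∅ = 1 := by
  simp [tp, tm, ← two_mul, pow_mul]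

lemma tp_congr (h : ∀ A ⊆ E, σ A + ρ ∅ = ρ A + σ ∅) : tp σ E = tp ρ E := by
  refine Finset.sum_congr rfl fun A hA => ?_
  have h1 := h A (Finset.mem_powerset.1 hA)
  have h2 := h E subset_rfl
  exact tm_congr (by omega) (by omega)

lemma tp_loop (hρ : IsRk ρ) (he : e ∈ E) (h : ρ {e} = ρ ∅) : tp ρ E = 0 := by
  obtain ⟨E, he', rfl⟩ : ∃ F, e ∉ F ∧ insert e F = E :=
    ⟨E.erase e, by simp, Finset.insert_erase he⟩
  rw [tp, Finset.sum_powerset_insert he', ← Finset.sum_add_distrib]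
  refine Finset.sum_eq_zero fun A hA => ?_
  have hA := Finset.mem_powerset.1 hA
  have heA : e ∉ A := fun h => he' (hA h)
  have h1 := hρ.submod A {e}
  rw [Finset.union_comm, ← Finset.insert_eq, Finset.inter_singleton_of_notMem heA] at h1
  have h2 := hρ.mono _ _ (Finset.subset_insert e A)
  rw [Finset.card_insert_of_notMem heA]
  exact tm_cancel (by omega) (by omega)

lemma tp_del_con (he : e ∉ E) (h : ρ {e} = ρ ∅ + 1) (hc : ρ (insert e E) = ρ E) :
    tp ρ (insert e E) = tp ρ E + tp (fun A => ρ (A ∪ {e})) E := by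
  rw [tp, Finset.sum_powerset_insert he]
  congr 1
  · rw [hc, tp]
  · refine Finset.sum_congr rfl fun A hA => ?_
    have hA := Finset.mem_powerset.1 hA
    have heA : e ∉ A := fun h => he (hA h)
    simp only [Finset.union_comm _ {e}, ← Finset.insert_eq, Finset.card_insert_of_notMem heA,
      insert_empty_eq]
    exact tm_congr rfl (by omega)

lemma sum_powerset_union {R : Type*} [AddCommMonoid R] (hd : Disjoint A B) (g : Finset α → R) :
    ∑ S ∈ (A ∪ B).powerset, g S = ∑ S ∈ A.powerset, ∑ T ∈ B.powerset, g (S ∪ T) := by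
  rw [← Finset.sum_product']
  refine Finset.sum_nbij' (fun S => (S ∩ A, S ∩ B)) (fun p => p.1 ∪ p.2) ?_ ?_ ?_ ?_ ?_
  · intro S _; simp
  · simp only [Finset.mem_product, Finset.mem_powerset]
    exact fun p hp => Finset.union_subset_union hp.1 hp.2
  · intro S hS
    simp only [Finset.mem_powerset] at hS
    simp only [← Finset.inter_union_distrib_left]
    exact Finset.inter_eq_left.2 hS
  · rintro ⟨S, T⟩ hp
    simp only [Finset.mem_product, Finset.mem_powerset] at hp
    ext x <;> simp only [Finset.mem_inter, Finset.mem_union]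
    · have := @hp.1 x; have := @hp.2 x; have := @Finset.disjoint_left _ A B; grind
    · have := @hp.1 x; have := @hp.2 x; have := @Finset.disjoint_left _ A B; grind
  · intro S hS
    simp only [Finset.mem_powerset] at hS
    simp only [← Finset.inter_union_distrib_left]
    rw [Finset.inter_eq_left.2 hS]

/-- `A` and `B` are disjoint and the restriction to `A ∪ B` is the direct sum of the restrictions
to `A` and to `B`. -/
def Dir (ρ : Finset α → ℕ) (A B : Finset α) : Prop :=
  Disjoint A B ∧ ρ (A ∪ B) + ρ ∅ = ρ A + ρ B

lemma Dir.symm (h : Dir ρ A B) : Dir ρ B A :=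
  ⟨h.1.symm, by rw [Finset.union_comm, h.2, add_comm]⟩

lemma IsRk.union_le (hρ : IsRk ρ) (h : Disjoint A B) : ρ (A ∪ B) + ρ ∅ ≤ ρ A + ρ B := by
  have := hρ.submod A B
  rwa [Finset.disjoint_iff_inter_eq_empty.1 h] at this

lemma Dir.right (hρ : IsRk ρ) (h : Dir ρ A B) (hT : T ⊆ B) : Dir ρ A T := by
  have hd := h.1.mono_right hT
  refine ⟨hd, le_antisymm (hρ.union_le hd) ?_⟩
  have h1 := hρ.submod (A ∪ T) B
  rw [Finset.union_assoc, Finset.union_eq_right.2 hT, Finset.union_inter_distrib_right,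
    Finset.disjoint_iff_inter_eq_empty.1 h.1, Finset.empty_union, Finset.inter_eq_left.2 hT] at h1
  have := h.2
  omega

lemma Dir.mono (hρ : IsRk ρ) (h : Dir ρ A B) (hS : S ⊆ A) (hT : T ⊆ B) : Dir ρ S T :=
  ((h.right hρ hT).symm.right hρ hS).symm

lemma tp_union (hρ : IsRk ρ) (h : Dir ρ A B) : tp ρ (A ∪ B) = tp ρ A * tp ρ B := by
  rw [tp, tp, tp, sum_powerset_union h.1, Finset.sum_mul_sum]
  refine Finset.sum_congr rfl fun S hS => Finset.sum_congr rfl fun T hT => ?_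
  rw [Finset.mem_powerset] at hS hT
  have h1 := (h.mono hρ hS hT)
  have h2 := h1.2
  have h3 := h.2
  have h4 := hρ.mono _ _ hS
  have h5 := hρ.mono _ _ hT
  rw [tm_mul, Finset.card_union_of_disjoint h1.1]
  exact tm_congr (by omega) (by omega)

lemma tp_single (h : ρ {e} = ρ ∅ + 1) : tp ρ {e} = X := by
  rw [← insert_empty_eq, tp, Finset.sum_powerset_insert (by simp)]
  simp only [Finset.powerset_empty, Finset.sum_singleton, insert_empty_eq, h]
  rw [tm_X (by omega) (by simp; omega)]
  simp [tm, show 1 + (ρ ∅ + 1) + ρ ∅ = 2 * (ρ ∅ + 1) by ring, pow_mul]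

/-- `T(M; x, 0) / x`, as the sum over the sets whose closure avoids a fixed element `e`. -/
noncomputable def tq (ρ : Finset α → ℕ) (e : α) (E : Finset α) : ℤ[X] :=
  ∑ A ∈ E.powerset, if ρ (insert e A) = ρ A + 1 then
    tm (ρ (insert e E) - 1 - ρ A) (A.card + ρ A + ρ ∅) else 0

/-- The sets `A` and `A ∪ {e}` cancel when `e` lies in the closure of `A`, and otherwise together
contribute a multiple of `x`. -/
lemma tp_eq_X_mul (hρ : IsRk ρ) (he : e ∉ E) : tp ρ (insert e E) = X * tq ρ e E := by
  rw [tp, Finset.sum_powerset_insert he, ← Finset.sum_add_distrib, tq, Finset.mul_sum]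
  refine Finset.sum_congr rfl fun A hA => ?_
  have hA := Finset.mem_powerset.1 hA
  have heA : e ∉ A := fun h => he (hA h)
  have h2 := hρ.mono _ _ (Finset.subset_insert e A)
  have h3 := hρ.unit e A
  have h4 := hρ.mono _ _ (Finset.insert_subset_insert e hA)
  rw [Finset.card_insert_of_notMem heA]
  split_ifs with hc
  · rw [add_comm, add_comm, tm_X (n := A.card + 1 + ρ (insert e A) + ρ ∅)
      (b := ρ (insert e E) - ρ (insert e A)) (by omega) (by omega)]
    congr 1
    exact tm_congr (by omega) (by omega)
  · rw [mul_zero]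
    exact tm_cancel (by omega) (by omega)

lemma IsRk.ins_le (hρ : IsRk ρ) (hST : S ⊆ T) :
    ρ (insert e T) + ρ S ≤ ρ (insert e S) + ρ T := by
  have h := hρ.submod (insert e S) T
  have h1 := hρ.mono S (insert e S ∩ T) (Finset.subset_inter (Finset.subset_insert _ _) hST)
  rw [Finset.insert_union, Finset.union_eq_right.2 hST] at h
  omega

/-- If `M / e` is the direct sum of its restrictions to `A` and `B`, then `M` is a parallel
connection, and `T(M; x, 0) / x` is multiplicative. -/
lemma tq_union (hρ : IsRk ρ) (he : ρ {e} = ρ ∅ + 1)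
    (h : Dir (fun S => ρ (S ∪ {e})) A B) : tq ρ e (A ∪ B) = tq ρ e A * tq ρ e B := by
  rw [tq, tq, tq, sum_powerset_union h.1, Finset.sum_mul_sum]
  refine Finset.sum_congr rfl fun S hS => Finset.sum_congr rfl fun T hT => ?_
  rw [Finset.mem_powerset] at hS hT
  have h1 := (h.mono (hρ.con _) hS hT)
  have h2 := h1.2
  have h3 := h.2
  simp only [Finset.union_comm _ {e}, ← Finset.insert_eq, insert_empty_eq] at h2 h3
  have h4 := hρ.mono _ _ (Finset.insert_subset_insert e hS)
  have h5 := hρ.mono _ _ (Finset.insert_subset_insert e hT)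
  have h6 := hρ.ins_le (e := e) (Finset.subset_union_left (s₁ := S) (s₂ := T))
  have h7 := hρ.ins_le (e := e) (Finset.subset_union_right (s₁ := S) (s₂ := T))
  have h8 := hρ.unit e S
  have h9 := hρ.unit e T
  have h10 := hρ.unit e (S ∪ T)
  have h11 := hρ.union_le h1.1
  rw [Finset.card_union_of_disjoint h1.1]
  by_cases hc : ρ (insert e (S ∪ T)) = ρ (S ∪ T) + 1
  · rw [if_pos hc, if_pos (by omega), if_pos (by omega), tm_mul]
    exact tm_congr (by omega) (by omega)
  · rw [if_neg hc]
    by_cases hc1 : ρ (insert e S) = ρ S + 1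
    · rw [if_neg (c := ρ (insert e T) = ρ T + 1) (by omega), mul_zero]
    · rw [if_neg hc1, zero_mul]

/-- `T(M; x, 0)` of a parallel connection. -/
lemma tp_par (hρ : IsRk ρ) (he : ρ {e} = ρ ∅ + 1) (hA : e ∉ A) (hB : e ∉ B)
    (h : Dir (fun S => ρ (S ∪ {e})) A B) :
    X * tp ρ (insert e (A ∪ B)) = tp ρ (insert e A) * tp ρ (insert e B) := by
  rw [tp_eq_X_mul hρ (by simp [hA, hB]), tp_eq_X_mul hρ hA, tp_eq_X_mul hρ hB,
    tq_union hρ he h]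
  ring

lemma tm_coeff_zero (a m : ℕ) : (tm a m).coeff 0 = (-1) ^ (a + m) := by
  simp [tm, coeff_zero_eq_eval_zero, pow_add]

/-- Crapo's formula for the beta invariant, summed over the sets whose closure contains `e`. -/
lemma beta_eq (hρ : IsRk ρ) (he : e ∉ E) (hE : E.Nonempty) :
    (tp ρ (insert e E)).coeff 1 = (-1) ^ (ρ (insert e E) + ρ ∅) *
      ∑ S ∈ E.powerset, if ρ (insert e S) = ρ S then (-1 : ℤ) ^ S.card else 0 := by
  rw [tp_eq_X_mul hρ he, coeff_X_mul, tq, finsetSum_coeff, ← sub_eq_zero, Finset.mul_sum,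
    ← Finset.sum_sub_distrib]
  have key : ∑ S ∈ E.powerset, -(-1 : ℤ) ^ (ρ (insert e E) + ρ ∅) * (-1) ^ S.card = 0 := by
    rw [← Finset.mul_sum, Finset.sum_powerset_neg_one_pow_card_of_nonempty hE, mul_zero]
  refine Eq.trans (Finset.sum_congr rfl fun S hS => ?_) key
  have hS := Finset.mem_powerset.1 hS
  have h2 := hρ.mono _ _ (Finset.subset_insert e S)
  have h3 := hρ.unit e S
  have h4 := hρ.mono _ _ (Finset.insert_subset_insert e hS)
  split_ifs with h5 h6 h6
  · omega
  · rw [tm_coeff_zero, neg_one_pow_eq_pow_mod_two, show (ρ (insert e E) - 1 - ρ S +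
      (S.card + ρ S + ρ ∅)) % 2 = (ρ (insert e E) + ρ ∅ + S.card + 1) % 2 by omega,
      ← neg_one_pow_eq_pow_mod_two]
    ring
  · simp
  · omega

/-- If `M \ e` is the direct sum of its restrictions to `A` and `B`, then `M` is a series
connection, and its beta invariant is that of `M / B` times that of `M / A`. -/
lemma beta_series (hρ : IsRk ρ) (hA : e ∉ A) (hB : e ∉ B) (hA' : A.Nonempty) (hB' : B.Nonempty)
    (h : Dir ρ A B) (hc : ρ (insert e (A ∪ B)) = ρ (A ∪ B)) :
    (tp ρ (insert e (A ∪ B))).coeff 1 = (tp (fun S => ρ (S ∪ B)) (insert e A)).coeff 1 *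
      (tp (fun S => ρ (S ∪ A)) (insert e B)).coeff 1 := by
  rw [beta_eq hρ (by simp [hA, hB]) (by simp [hA']), beta_eq (hρ.con B) hA hA',
    beta_eq (hρ.con A) hB hB', sum_powerset_union h.1, mul_mul_mul_comm, Finset.sum_mul_sum]
  have hAB := h.2
  congr 1
  · rw [← pow_add, neg_one_pow_eq_pow_mod_two, neg_one_pow_eq_pow_mod_two (_ + _)]
    simp only [Finset.insert_union, Finset.empty_union, Finset.union_comm B A]
    congr 1
    omega
  · refine Finset.sum_congr rfl fun S hS => Finset.sum_congr rfl fun T hT => ?_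
    rw [Finset.mem_powerset] at hS hT
    have h1 := (h.mono hρ hS hT)
    have h2 := (h.mono hρ hS subset_rfl).2
    have h3 := (h.mono hρ subset_rfl hT).2
    have h4 := h1.2
    have h5 := hρ.ins_le (e := e) (S := S ∪ T) (T := S ∪ B) (Finset.union_subset_union_right hT)
    have h6 := hρ.ins_le (e := e) (S := S ∪ T) (T := A ∪ T) (Finset.union_subset_union_left hS)
    have h7 := hρ.mono _ _ (Finset.subset_insert e (S ∪ T))
    have h8 := hρ.mono _ _ (Finset.subset_insert e (S ∪ B))
    have h9 := hρ.mono _ _ (Finset.subset_insert e (A ∪ T))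
    have h10 := hρ.submod (insert e (S ∪ B)) (insert e (A ∪ T))
    rw [← Finset.insert_inter_distrib] at h10
    have e1 : insert e (S ∪ B) ∪ insert e (A ∪ T) = insert e (A ∪ B) := by
      ext x; have := @hS x; have := @hT x; grind
    have e2 : (S ∪ B) ∩ (A ∪ T) = S ∪ T := by
      ext x; have := @hS x; have := @hT x; have := @Finset.disjoint_left _ A B; have := h.1; grind
    rw [e1, e2] at h10
    simp only [Finset.insert_union, Finset.union_comm T A]
    rw [Finset.card_union_of_disjoint h1.1]
    by_cases hc : ρ (insert e (S ∪ T)) = ρ (S ∪ T)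
    · rw [if_pos hc, if_pos (by omega), if_pos (by omega), pow_add]
    · rw [if_neg hc]
      by_cases hc1 : ρ (insert e (S ∪ B)) = ρ (S ∪ B)
      · rw [if_neg (c := ρ (insert e (A ∪ T)) = ρ (A ∪ T)) (by omega), mul_zero]
      · rw [if_neg hc1, zero_mul]

lemma IsRk.single (hρ : IsRk ρ) (e : α) : ρ {e} = ρ ∅ ∨ ρ {e} = ρ ∅ + 1 := by
  have h1 := hρ.mono _ _ (Finset.empty_subset {e})
  have h2 := hρ.unit e ∅
  rw [insert_empty_eq] at h2
  omega

lemma tp_nonneg (n : ℕ) : ∀ (ρ : Finset α → ℕ) (E : Finset α), IsRk ρ → E.card = n →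
    ∀ i, 0 ≤ (tp ρ E).coeff i := by
  induction n with
  | zero =>
    intro ρ E _ hE i
    rw [Finset.card_eq_zero.1 hE, tp_empty, coeff_one]
    split_ifs <;> simp
  | succ n ih =>
    intro ρ E hρ hE i
    obtain ⟨e, E, he, rfl, rfl⟩ := Finset.card_eq_succ.1 hE
    rcases hρ.single e with h | h
    · simp [tp_loop hρ (Finset.mem_insert_self e E) h]
    · by_cases hc : ρ (insert e E) = ρ E
      · rw [tp_del_con he h hc, coeff_add]
        exact add_nonneg (ih _ _ hρ rfl i) (ih _ _ (hρ.con _) rfl i)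
      · have h2 := hρ.mono _ _ (Finset.subset_insert e E)
        have h3 := hρ.unit e E
        have hd : Dir ρ {e} E := ⟨by simpa using he, by rw [← Finset.insert_eq]; omega⟩
        rw [Finset.insert_eq, tp_union hρ hd, tp_single h]
        cases i with
        | zero => simp
        | succ i => rw [coeff_X_mul]; exact ih _ _ hρ rfl i

/-! ### Connected components -/

/-- Connectedness of the restriction to `E` (which is allowed to be empty). -/
def Conn (ρ : Finset α → ℕ) (E : Finset α) : Prop :=
  ∀ A B, A ∪ B = E → Dir ρ A B → A = ∅ ∨ B = ∅

open Classical in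
/-- The component of `e` in the restriction to `E`: the elements that no separator splits
from `e`. -/
noncomputable def cls (ρ : Finset α → ℕ) (E : Finset α) (e : α) : Finset α :=
  E.filter fun f => ∀ A ⊆ E, ρ A + ρ (E \ A) = ρ E + ρ ∅ → (e ∈ A ↔ f ∈ A)

/-- The number of components of the restriction to `E`. -/
noncomputable def nC (ρ : Finset α → ℕ) (E : Finset α) : ℕ := (E.image (cls ρ E)).card

lemma mem_cls : f ∈ cls ρ E e ↔
    f ∈ E ∧ ∀ A ⊆ E, ρ A + ρ (E \ A) = ρ E + ρ ∅ → (e ∈ A ↔ f ∈ A) := by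
  simp [cls]

lemma self_mem_cls (he : e ∈ E) : e ∈ cls ρ E e := by simp [mem_cls, he]

lemma nC_empty : nC ρ ∅ = 0 := by simp [nC]

lemma nC_pos (h : E.Nonempty) : 1 ≤ nC ρ E := by
  rw [nC, Nat.succ_le_iff, Finset.card_pos]
  exact h.image _

lemma nC_conn (hE : E.Nonempty) (h : Conn ρ E) : nC ρ E = 1 := by
  rw [nC, Finset.card_eq_one]
  refine ⟨E, Finset.eq_singleton_iff_nonempty_unique_mem.2 ⟨hE.image _, ?_⟩⟩
  simp only [Finset.mem_image]
  rintro _ ⟨e, he, rfl⟩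
  ext f
  rw [mem_cls, and_iff_left_iff_imp]
  intro hf A hA hr
  have hu : A ∪ E \ A = E := Finset.union_sdiff_of_subset hA
  rcases h A (E \ A) hu ⟨Finset.disjoint_sdiff, by rw [hu, hr]⟩ with h1 | h1
  · simp [h1]
  · have := Finset.sdiff_eq_empty_iff_subset.1 h1
    exact ⟨fun _ => this hf, fun _ => this he⟩

lemma cls_union (hρ : IsRk ρ) (h : Dir ρ A B) (he : e ∈ A) : cls ρ (A ∪ B) e = cls ρ A e := by
  have hd := Finset.disjoint_left.1 h.1
  have hAB := h.2
  have hd' := h.1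
  ext f
  rw [mem_cls, mem_cls]
  constructor
  · rintro ⟨hf, hs⟩
    have hfA : f ∈ A := by
      refine (hs A Finset.subset_union_left ?_).1 he
      rw [Finset.union_sdiff_cancel_left h.1, h.2]
    refine ⟨hfA, fun S hS hr => hs S (hS.trans Finset.subset_union_left) ?_⟩
    have e1 : (A ∪ B) \ S = (A \ S) ∪ B := by
      ext x; have := @hS x; have := @hd x; grind
    have h2 := (h.mono hρ (Finset.sdiff_subset (s := A) (t := S)) subset_rfl).2
    rw [e1]
    omega
  · rintro ⟨hf, hs⟩
    refine ⟨Finset.mem_union_left _ hf, fun S hS hr => ?_⟩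
    have h1 := (h.mono hρ (Finset.inter_subset_right (s₁ := S) (s₂ := A))
      (Finset.inter_subset_right (s₁ := S) (s₂ := B))).2
    have h2 := (h.mono hρ (Finset.sdiff_subset (s := A) (t := S ∩ A))
      (Finset.sdiff_subset (s := B) (t := S ∩ B))).2
    have e1 : S ∩ A ∪ S ∩ B = S := by
      rw [← Finset.inter_union_distrib_left, Finset.inter_eq_left.2 hS]
    have e2 : A \ (S ∩ A) ∪ B \ (S ∩ B) = (A ∪ B) \ S := by
      ext x; have := @hd x; grind
    rw [e1] at h1
    rw [e2] at h2
    have h3 := hρ.union_le (Finset.disjoint_sdiff (s := S ∩ A) (t := A))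
    have h4 := hρ.union_le (Finset.disjoint_sdiff (s := S ∩ B) (t := B))
    rw [Finset.union_sdiff_of_subset Finset.inter_subset_right] at h3 h4
    have := hs (S ∩ A) Finset.inter_subset_right (by omega)
    simpa [he, hf] using this

lemma nC_union (hρ : IsRk ρ) (h : Dir ρ A B) : nC ρ (A ∪ B) = nC ρ A + nC ρ B := by
  rw [nC, nC, nC, Finset.image_union, Finset.card_union_of_disjoint]
  · congr 2
    · exact Finset.image_congr fun e he => cls_union hρ h he
    · rw [Finset.union_comm]
      exact Finset.image_congr fun e he => cls_union hρ h.symm he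
  · rw [Finset.disjoint_left]
    simp only [Finset.mem_image, not_exists, not_and]
    rintro _ ⟨e, he, rfl⟩ f hf hfe
    rw [cls_union hρ h he, Finset.union_comm, cls_union hρ h.symm hf] at hfe
    have h1 : f ∈ cls ρ A e := hfe ▸ self_mem_cls hf
    exact Finset.disjoint_left.1 h.1 (mem_cls.1 h1).1 hf

lemma nC_congr (h : ∀ A ⊆ E, σ A + ρ ∅ = ρ A + σ ∅) : nC σ E = nC ρ E := by
  rw [nC, nC]
  congr 1
  refine Finset.image_congr fun e _ => ?_
  ext f
  rw [mem_cls, mem_cls]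
  refine and_congr_right fun _ => forall₂_congr fun A hA => ?_
  have h1 := h A hA
  have h2 := h E subset_rfl
  have h3 := h (E \ A) Finset.sdiff_subset
  rw [show σ A + σ (E \ A) = σ E + σ ∅ ↔ ρ A + ρ (E \ A) = ρ E + ρ ∅ by omega]

lemma not_conn (h : ¬ Conn ρ E) :
    ∃ A B, A.Nonempty ∧ B.Nonempty ∧ A ∪ B = E ∧ Dir ρ A B ∧ A.card < E.card ∧
      B.card < E.card := by
  simp only [Conn, not_forall, not_or] at h
  obtain ⟨A, B, rfl, hd, hA, hB⟩ := h
  rw [← ne_eq, ← Finset.nonempty_iff_ne_empty] at hA hB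
  have := hA.card_pos
  have := hB.card_pos
  exact ⟨A, B, hA, hB, rfl, hd, by rw [Finset.card_union_of_disjoint hd.1]; omega,
    by rw [Finset.card_union_of_disjoint hd.1]; omega⟩

/-- An element of a connected matroid with at least two elements is neither a loop nor a coloop. -/
lemma Conn.elem (hρ : IsRk ρ) (he : e ∉ E) (hE : E.Nonempty) (h : Conn ρ (insert e E)) :
    ρ {e} = ρ ∅ + 1 ∧ ρ (insert e E) = ρ E := by
  have h1 := hρ.mono _ _ (Finset.subset_insert e E)
  have h2 := hρ.unit e E
  have h3 := hρ.single e
  by_contra hc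
  have hd : Dir ρ {e} E := by
    refine ⟨by simpa using he, ?_⟩
    have h4 := hρ.union_le (A := {e}) (B := E) (by simpa using he)
    rw [← Finset.insert_eq] at h4 ⊢
    omega
  rcases h {e} E (Finset.insert_eq e E).symm hd with h | h
  · simp at h
  · exact hE.ne_empty h

/-- `T(M; x, 0)` vanishes at `0` to order at least the number of components. -/
lemma X_pow_nC_dvd (n : ℕ) : ∀ E : Finset α, IsRk ρ → E.card = n →
    (X : ℤ[X]) ^ nC ρ E ∣ tp ρ E := by
  induction n using Nat.strong_induction_on with
  | _ n ih =>
    intro E hρ hE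
    by_cases hc : Conn ρ E
    · rcases E.eq_empty_or_nonempty with rfl | hne
      · simp [nC_empty]
      · rw [nC_conn hne hc, pow_one]
        obtain ⟨e, he⟩ := hne
        rw [← Finset.insert_erase he, tp_eq_X_mul hρ (by simp)]
        exact dvd_mul_right _ _
    · obtain ⟨A, B, -, -, rfl, hd, hA, hB⟩ := not_conn hc
      rw [tp_union hρ hd, nC_union hρ hd, pow_add]
      exact mul_dvd_mul (ih _ (hE ▸ hA) A hρ rfl) (ih _ (hE ▸ hB) B hρ rfl)

/-- The coefficient of `T(M; x, 0)` at the number of components: the product of the beta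
invariants of the components. -/
noncomputable def lead (ρ : Finset α → ℕ) (E : Finset α) : ℤ := (tp ρ E).coeff (nC ρ E)

lemma lead_nonneg (hρ : IsRk ρ) : 0 ≤ lead ρ E := tp_nonneg _ _ _ hρ rfl _

lemma lead_union (hρ : IsRk ρ) (h : Dir ρ A B) : lead ρ (A ∪ B) = lead ρ A * lead ρ B := by
  obtain ⟨a, ha⟩ := X_pow_nC_dvd (ρ := ρ) _ A hρ rfl
  obtain ⟨b, hb⟩ := X_pow_nC_dvd (ρ := ρ) _ B hρ rfl
  rw [lead, lead, lead, tp_union hρ h, nC_union hρ h, ha, hb, mul_mul_mul_comm, ← pow_add]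
  simp only [coeff_X_pow_mul', le_refl, if_true, Nat.sub_self, mul_coeff_zero]

/-- If `M` is connected and `M \ e` is the direct sum of `A` and `B`, then `M / B` is connected. -/
lemma conn_con (hρ : IsRk ρ) (h : Dir ρ A B)
    (hc : Conn ρ (insert e (A ∪ B))) : Conn (fun S => ρ (S ∪ B)) (insert e A) := by
  have key : ∀ S T, S ∪ T = insert e A → Dir (fun S => ρ (S ∪ B)) S T → e ∈ S →
      T = ∅ := by
    intro S T hST hd heS
    have hTA : T ⊆ A := by
      intro x hx
      have h1 : x ∈ insert e A := hST ▸ Finset.mem_union_right _ hx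
      refine (Finset.mem_insert.1 h1).resolve_left ?_
      rintro rfl
      exact Finset.disjoint_left.1 hd.1 heS hx
    have e1 : S ∪ B ∪ T = insert e (A ∪ B) := by
      rw [Finset.union_right_comm, hST, Finset.insert_union]
    have hd2 := hd.2
    simp only [Finset.empty_union] at hd2
    rw [Finset.union_right_comm, e1] at hd2
    have h1 := (h.mono hρ hTA subset_rfl).2
    have hdis : Disjoint (S ∪ B) T :=
      Finset.disjoint_union_left.2 ⟨hd.1, (h.1.mono_left hTA).symm⟩
    refine (hc _ _ e1 ⟨hdis, by rw [e1]; omega⟩).resolve_left ?_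
    exact Finset.ne_empty_of_mem (Finset.mem_union_left _ heS)
  intro S T hST hd
  have he : e ∈ S ∪ T := hST ▸ Finset.mem_insert_self _ _
  rcases Finset.mem_union.1 he with he | he
  · exact Or.inr (key S T hST hd he)
  · exact Or.inl (key T S (by rw [Finset.union_comm, hST]) hd.symm he)

/-- Deleting an element of a connected matroid does not increase the product of the beta
invariants of the components. If the deletion is `A ⊕ B`, induct on `M / B` and `M / A`, whose
deletions of `e` are `M | A` and `M | B`. -/
lemma lead_del_le (n : ℕ) : ∀ (ρ : Finset α → ℕ) (E : Finset α), IsRk ρ → E.card = n → e ∉ E →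
    E.Nonempty → Conn ρ (insert e E) → lead ρ E ≤ (tp ρ (insert e E)).coeff 1 := by
  induction n using Nat.strong_induction_on with
  | _ n ih =>
    intro ρ E hρ hE he hne hc
    obtain ⟨h1, h2⟩ := hc.elem hρ he hne
    by_cases hcE : Conn ρ E
    · rw [tp_del_con he h1 h2, coeff_add, lead, nC_conn hne hcE]
      exact le_add_of_nonneg_right (tp_nonneg _ _ _ (hρ.con _) rfl _)
    · obtain ⟨A, B, hA, hB, rfl, hd, hA', hB'⟩ := not_conn hcE
      have heA : e ∉ A := fun h => he (Finset.mem_union_left _ h)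
      have heB : e ∉ B := fun h => he (Finset.mem_union_right _ h)
      have key : ∀ {A B : Finset α}, Dir ρ A B → lead (fun S => ρ (S ∪ B)) A = lead ρ A := by
        intro A B hd
        have : ∀ S ⊆ A, (fun S => ρ (S ∪ B)) S + ρ ∅ = ρ S + (fun S => ρ (S ∪ B)) ∅ := by
          intro S hS
          simpa using (hd.mono hρ hS subset_rfl).2
        rw [lead, lead, nC_congr this, tp_congr this]
      rw [lead_union hρ hd, beta_series hρ heA heB hA hB hd h2, ← key hd, ← key hd.symm]
      refine mul_le_mul (ih _ (hE ▸ hA') _ _ (hρ.con _) rfl heA hA (conn_con hρ hd hc))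
        (ih _ (hE ▸ hB') _ _ (hρ.con _) rfl heB hB
          (conn_con hρ hd.symm (by rwa [Finset.union_comm])))
        (lead_nonneg (hρ.con _)) (tp_nonneg _ _ _ (hρ.con _) rfl _)

/-- If `M` is connected and `M / e` is the direct sum of `A` and `B`, then `M | (A ∪ {e})` is
connected. -/
lemma conn_par (hρ : IsRk ρ) (heB : e ∉ B)
    (h : Dir (fun S => ρ (S ∪ {e})) A B) (hc : Conn ρ (insert e (A ∪ B))) :
    Conn ρ (insert e A) := by
  have key : ∀ S T, S ∪ T = insert e A → Dir ρ S T → e ∈ S → T = ∅ := by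
    intro S T hST hd heS
    have hdS := Finset.disjoint_left.1 hd.1
    have hdA := Finset.disjoint_left.1 h.1
    have hSA : ∀ x, x ∈ S ∪ T ↔ x ∈ insert e A := fun x => by rw [hST]
    have e1 : S ∪ B ∪ T = insert e (A ∪ B) := by
      rw [Finset.union_right_comm, hST, Finset.insert_union]
    have e2 : S ∩ insert e B = {e} := by
      ext x; have := hSA x; have := @hdA x; grind
    have e3 : S ∪ insert e B = S ∪ B := by
      ext x; grind
    have hs := hρ.submod S (insert e B)
    rw [e2, e3] at hs
    have hd2 := hd.2
    rw [hST] at hd2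
    have hh := h.2
    simp only [Finset.union_comm _ {e}, ← Finset.insert_eq, insert_empty_eq] at hh
    have hdis : Disjoint (S ∪ B) T := by
      rw [Finset.disjoint_left]
      intro x hx; have := @hdS x; have := hSA x; have := @hdA x; grind
    have h5 := hρ.union_le hdis
    rw [e1] at h5
    refine (hc _ _ e1 ⟨hdis, by rw [e1]; omega⟩).resolve_left ?_
    exact Finset.ne_empty_of_mem (Finset.mem_union_left _ heS)
  intro S T hST hd
  have he : e ∈ S ∪ T := hST ▸ Finset.mem_insert_self _ _
  rcases Finset.mem_union.1 he with he | he
  · exact Or.inr (key S T hST hd he)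
  · exact Or.inl (key T S (by rw [Finset.union_comm, hST]) hd.symm he)

/-- Deleting an element `e` with a parallel element `f` preserves connectedness. -/
lemma conn_parallel (hρ : IsRk ρ) (he : ρ {e} = ρ ∅ + 1) (heE : e ∉ E) (hfE : f ∈ E)
    (hf : ρ {f} = ρ ∅ + 1) (hef : ρ {f, e} = ρ {e}) (hc : Conn ρ (insert e E))
    (hr : ρ (insert e E) = ρ E) : Conn ρ E := by
  have key : ∀ A B, A ∪ B = E → Dir ρ A B → f ∈ A → B = ∅ := by
    rintro A B rfl hd hfA
    have h1 := hρ.ins_le (e := e) (Finset.singleton_subset_iff.2 hfA)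
    rw [Finset.pair_comm e f] at h1
    have h2 := hρ.mono _ _ (Finset.subset_insert e A)
    have h3 := hd.2
    refine (hc (insert e A) B (Finset.insert_union _ _ _) ⟨?_, ?_⟩).resolve_left (by simp)
    · rw [Finset.disjoint_insert_left]
      exact ⟨fun h => heE (Finset.mem_union_right _ h), hd.1⟩
    · rw [Finset.insert_union]; omega
  intro A B hAB hd
  rcases Finset.mem_union.1 (hAB ▸ hfE : f ∈ A ∪ B) with h | h
  · exact Or.inr (key A B hAB hd h)
  · exact Or.inl (key B A (by rw [Finset.union_comm, hAB]) hd.symm h)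

end Rk

/-! ### Coefficientwise inequalities -/

/-- Coefficientwise inequality of integer polynomials. -/
def PLe (p q : ℤ[X]) : Prop := ∀ n, p.coeff n ≤ q.coeff n

lemma PLe.rfl {p : ℤ[X]} : PLe p p := fun _ => le_rfl

lemma PLe.trans {p q r : ℤ[X]} (h : PLe p q) (h' : PLe q r) : PLe p r :=
  fun n => (h n).trans (h' n)

lemma PLe.add {p q p' q' : ℤ[X]} (h : PLe p q) (h' : PLe p' q') : PLe (p + p') (q + q') :=
  fun n => by simpa only [coeff_add] using add_le_add (h n) (h' n)

lemma PLe.mul {p q p' q' : ℤ[X]} (h : PLe p q) (h' : PLe p' q') (h0 : PLe 0 p') (h1 : PLe 0 q) :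
    PLe (p * p') (q * q') := fun n => by
  rw [coeff_mul, coeff_mul]
  exact Finset.sum_le_sum fun x _ => mul_le_mul (h _) (h' _) (h0 _) (h1 _)

lemma PLe.mul_nonneg {p q : ℤ[X]} (h : PLe 0 p) (h' : PLe 0 q) : PLe 0 (p * q) := by
  simpa using h.mul h' (fun _ => le_rfl) h

lemma PLe.mul_left {p q r : ℤ[X]} (h0 : PLe 0 r) (h : PLe p q) : PLe (r * p) (r * q) := by
  intro n
  rw [coeff_mul, coeff_mul]
  exact Finset.sum_le_sum fun x _ => mul_le_mul_of_nonneg_left (h _) (h0 _)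

lemma PLe_X : PLe 0 X := fun n => by rw [coeff_X]; split_ifs <;> simp

lemma PLe_one : PLe 0 1 := fun n => by rw [coeff_one]; split_ifs <;> simp

lemma PLe_C {c : ℤ} (hc : 0 ≤ c) : PLe 0 (C c) := fun n => by
  rw [coeff_C]; split_ifs <;> simp [hc]

lemma PLe_one_add_X : PLe 0 (1 + X) := by simpa using PLe_one.add PLe_X

lemma PLe.pow_nonneg {p : ℤ[X]} (h : PLe 0 p) (n : ℕ) : PLe 0 (p ^ n) := by
  induction n with
  | zero => simpa using PLe_one
  | succ n ih => rw [pow_succ]; exact ih.mul_nonneg h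

lemma PLe_of_sub {p q : ℤ[X]} (h : PLe 0 (q - p)) : PLe p q := fun n => by
  have := h n
  rw [coeff_zero, coeff_sub] at this
  omega

lemma PLe.C_mul {p : ℤ[X]} {c : ℤ} (hc : 0 ≤ c) (h : PLe 0 p) : PLe 0 (C c * p) :=
  (PLe_C hc).mul_nonneg h

lemma X_pow_PLe (n : ℕ) : PLe (X ^ n) ((1 + X) ^ n) := by
  induction n with
  | zero => simpa using PLe.rfl
  | succ n ih =>
    rw [pow_succ, pow_succ]
    refine ih.mul (by simpa using PLe_one.add PLe.rfl) PLe_X (PLe_one_add_X.pow_nonneg n)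

/-- The extremal polynomial. It equals `(x + β) (1 + x) ^ (d - 1)` for `1 ≤ d`, and it is used for
`d = 0` only with `β = 1`, when it equals `1` whatever the truncated exponent `d - 1`. -/
noncomputable def extr (β : ℤ) (d : ℕ) : ℤ[X] := (1 + X) ^ d + C (β - 1) * (1 + X) ^ (d - 1)

lemma extr_nonneg {β : ℤ} {d : ℕ} (h : 1 ≤ β) : PLe 0 (extr β d) := by
  rw [extr, ← add_zero (0 : ℤ[X])]
  exact (PLe_one_add_X.pow_nonneg d).add
    ((PLe_one_add_X.pow_nonneg (d - 1)).C_mul (sub_nonneg.2 h))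

lemma extr_mono {β γ : ℤ} {d : ℕ} (h : β ≤ γ) : PLe (extr β d) (extr γ d) := by
  refine PLe_of_sub ?_
  have : extr γ d - extr β d = C (γ - β) * (1 + X) ^ (d - 1) := by
    simp only [extr, C_sub]; ring
  rw [this]
  exact (PLe_one_add_X.pow_nonneg _).C_mul (sub_nonneg.2 h)

lemma extr_succ {β : ℤ} {d : ℕ} (h : d = 0 → β = 1) : extr β (d + 1) = (1 + X) * extr β d := by
  rcases d with _ | d
  · simp [extr, h rfl]
  · simp only [extr, Nat.add_sub_cancel]; ring

lemma extr_add {β : ℤ} {d : ℕ} (h : d = 0 → β = 1) (j : ℕ) :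
    extr β (j + d) = (1 + X) ^ j * extr β d := by
  induction j with
  | zero => simp
  | succ j ih => rw [add_right_comm, extr_succ (by intro h'; exact h (by omega)), ih]; ring

lemma extr_mul {β γ : ℤ} {c d : ℕ} (hβ : 1 ≤ β) (hγ : 1 ≤ γ) (h : c = 0 → β = 1)
    (h' : d = 0 → γ = 1) : PLe (extr β c * extr γ d) (extr (β * γ) (c + d)) := by
  rcases c with _ | c
  · simpa [extr, h rfl] using PLe.rfl
  rcases d with _ | d
  · simpa [extr, h' rfl] using PLe.rfl
  refine PLe_of_sub ?_
  have : extr (β * γ) (c + 1 + (d + 1)) - extr β (c + 1) * extr γ (d + 1) =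
      C ((β - 1) * (γ - 1)) * (X * (1 + X) ^ (c + d)) := by
    simp only [extr, show c + 1 + (d + 1) - 1 = c + d + 1 by omega, Nat.add_sub_cancel, C_mul, C_sub,
      C_1, pow_add]
    ring
  rw [this]
  exact (PLe_X.mul_nonneg (PLe_one_add_X.pow_nonneg _)).C_mul
    (mul_nonneg (sub_nonneg.2 hβ) (sub_nonneg.2 hγ))

/-- `p = x ^ k q` with `q` nonnegative of positive constant term `β`, and bounded by the extremal
polynomial `extr β d`. -/
structure Good (p : ℤ[X]) (k d : ℕ) (q : ℤ[X]) : Prop where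
  eq : p = X ^ k * q
  nonneg : PLe 0 q
  pos : 1 ≤ q.coeff 0
  zero : d = 0 → q.coeff 0 = 1
  le : PLe q (extr (q.coeff 0) d)

lemma Good.coeff {p q : ℤ[X]} {k d : ℕ} (h : Good p k d q) : p.coeff k = q.coeff 0 := by
  rw [h.eq, coeff_X_pow_mul', if_pos le_rfl, Nat.sub_self]

/-- The case of a matroid all of whose components have rank one. -/
lemma good_one {p : ℤ[X]} {k : ℕ} (h : p = X ^ k) : Good p k 0 1 where
  eq := by simp [h]
  nonneg := PLe_one
  pos := by simp
  zero := by simp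
  le := by simpa [extr] using PLe.rfl

/-- Direct sums. -/
lemma good_mul {q q' : ℤ[X]} {c d k l : ℕ} {p p' : ℤ[X]} (h : Good p k c q) (h' : Good p' l d q') :
    Good (p * p') (k + l) (c + d) (q * q') where
  eq := by rw [h.eq, h'.eq]; ring
  nonneg := h.nonneg.mul_nonneg h'.nonneg
  pos := by
    rw [mul_coeff_zero]
    exact one_le_mul_of_one_le_of_one_le h.pos h'.pos
  zero := by
    intro h0
    rw [mul_coeff_zero, h.zero (by omega), h'.zero (by omega), mul_one]
  le := by
    rw [mul_coeff_zero]
    exact (h.le.mul h'.le h'.nonneg (extr_nonneg h.pos)).trans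
      (extr_mul h.pos h'.pos h.zero h'.zero)

/-- Parallel connections. -/
lemma good_par {p p₁ p₂ q₁ q₂ : ℤ[X]} {c d : ℕ} (hp : X * p = p₁ * p₂) (h₁ : Good p₁ 1 c q₁)
    (h₂ : Good p₂ 1 d q₂) : Good p 1 (c + d) (q₁ * q₂) := by
  have h := good_mul h₁ h₂
  refine ⟨mul_left_cancel₀ (X_ne_zero (R := ℤ)) ?_, h.nonneg, h.pos, h.zero, h.le⟩
  rw [hp, h.eq]; ring

/-- Deletion-contraction when both `M \ e` and `M / e` are connected. -/
lemma good_add {p₁ p₂ q₁ q₂ : ℤ[X]} {d : ℕ} (h₁ : Good p₁ 1 (d + 1) q₁) (h₂ : Good p₂ 1 d q₂) :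
    Good (p₁ + p₂) 1 (d + 1) (q₁ + q₂) where
  eq := by rw [h₁.eq, h₂.eq]; ring
  nonneg := by simpa using h₁.nonneg.add h₂.nonneg
  pos := by have := h₁.pos; have := h₂.pos; rw [coeff_add]; omega
  zero := by omega
  le := by
    refine (h₁.le.add h₂.le).trans (PLe_of_sub ?_)
    rw [coeff_add]
    have h := h₂.pos
    have h0 := h₂.zero
    generalize q₁.coeff 0 = β at *
    generalize q₂.coeff 0 = γ at *
    rcases d with _ | d
    · have e : extr (β + γ) (0 + 1) - (extr β (0 + 1) + extr γ 0) = 0 := by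
        simp [extr, h0]
        ring
      rw [e]
      exact PLe.rfl
    · have e : extr (β + γ) (d + 1 + 1) - (extr β (d + 1 + 1) + extr γ (d + 1)) =
          C (γ - 1) * (X * (1 + X) ^ d) := by
        simp only [extr, Nat.add_sub_cancel, C_add, C_sub, C_1]; ring
      rw [e]
      exact (PLe_X.mul_nonneg (PLe_one_add_X.pow_nonneg _)).C_mul (sub_nonneg.2 h)

/-- Deletion-contraction when `M / e` is connected and `M \ e` has `j + 2` components. -/
lemma good_series {p₁ p₂ q₁ q₂ : ℤ[X]} {j d : ℕ} (h₁ : Good p₁ (j + 2) d q₁)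
    (h₂ : Good p₂ 1 (j + d) q₂) (h : q₁.coeff 0 ≤ q₂.coeff 0) :
    Good (p₁ + p₂) 1 (j + d + 1) (X * (X ^ j * q₁) + q₂) where
  eq := by rw [h₁.eq, h₂.eq]; ring
  nonneg := by
    simpa using (PLe_X.mul_nonneg ((PLe_X.pow_nonneg j).mul_nonneg h₁.nonneg)).add h₂.nonneg
  pos := by simpa using h₂.pos
  zero := by omega
  le := by
    have e : (X * (X ^ j * q₁) + q₂).coeff 0 = q₂.coeff 0 := by simp
    rw [e, extr_succ h₂.zero, add_comm 1, add_mul, one_mul]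
    refine PLe.add (PLe_X.mul_left ?_) h₂.le
    refine ((X_pow_PLe j).mul h₁.le h₁.nonneg (PLe_one_add_X.pow_nonneg j)).trans ?_
    rw [← extr_add h₁.zero]
    exact extr_mono h

/-! ### The inequality for rank functions -/

section Main

variable [DecidableEq α]

/-- For a loopless matroid of rank `nC + d`, the polynomial `T(M; x, 0)` is `x ^ nC` times a
polynomial with positive constant term that is bounded by the extremal one. -/
theorem good_tp (n : ℕ) : ∀ (ρ : Finset α → ℕ) (E : Finset α), IsRk ρ → E.card = n →
    (∀ e ∈ E, ρ {e} = ρ ∅ + 1) →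
    ∃ d q, nC ρ E + d + ρ ∅ = ρ E ∧ Good (tp ρ E) (nC ρ E) d q := by
  induction n using Nat.strong_induction_on with
  | _ n ih =>
    intro ρ E hρ hE hl
    by_cases hc : Conn ρ E
    swap
    · obtain ⟨A, B, hA, hB, rfl, hd, hA', hB'⟩ := not_conn hc
      obtain ⟨d₁, q₁, h₁, g₁⟩ := ih _ (hE ▸ hA') ρ A hρ rfl
        fun e he => hl e (Finset.mem_union_left _ he)
      obtain ⟨d₂, q₂, h₂, g₂⟩ := ih _ (hE ▸ hB') ρ B hρ rfl
        fun e he => hl e (Finset.mem_union_right _ he)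
      have := hd.2
      refine ⟨d₁ + d₂, q₁ * q₂, by rw [nC_union hρ hd]; omega, ?_⟩
      rw [nC_union hρ hd, tp_union hρ hd]
      exact good_mul g₁ g₂
    rcases E.eq_empty_or_nonempty with rfl | hne
    · exact ⟨0, 1, by simp [nC_empty], good_one (by simp [nC_empty, tp_empty])⟩
    rw [nC_conn hne hc]
    obtain ⟨e, E, he, rfl⟩ : ∃ e F, e ∉ F ∧ insert e F = E :=
      ⟨hne.choose, E.erase hne.choose, by simp, Finset.insert_erase hne.choose_spec⟩
    rw [Finset.card_insert_of_notMem he] at hE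
    have hle := hl e (Finset.mem_insert_self e E)
    have hlE : ∀ f ∈ E, ρ {f} = ρ ∅ + 1 := fun f hf => hl f (Finset.mem_insert_of_mem hf)
    rcases E.eq_empty_or_nonempty with rfl | hne'
    · rw [insert_empty_eq]
      exact ⟨0, 1, by omega, good_one (by rw [tp_single hle, pow_one])⟩
    obtain ⟨-, hr⟩ := hc.elem hρ he hne'
    have hdc := tp_del_con he hle hr
    obtain ⟨d₁, q₁, h₁, g₁⟩ := ih _ (by omega) ρ E hρ rfl hlE
    have hρe := hρ.con {e}
    -- If `e` has a parallel element, contracting `e` creates a loop and contributes nothing.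
    by_cases hpar : ∃ f ∈ E, ρ ({f} ∪ {e}) = ρ (∅ ∪ {e})
    · obtain ⟨f, hf, hfe⟩ := hpar
      rw [tp_loop hρe hf hfe, add_zero] at hdc
      have hcE : Conn ρ E := conn_parallel hρ hle he hf (hlE f hf)
        (by simpa [← Finset.insert_eq] using hfe) hc hr
      rw [nC_conn hne' hcE] at h₁ g₁
      rw [hdc, hr]
      exact ⟨d₁, q₁, h₁, g₁⟩
    have hl' : ∀ f ∈ E, ρ ({f} ∪ {e}) = ρ (∅ ∪ {e}) + 1 := fun f hf =>
      (hρe.single f).resolve_left fun h => hpar ⟨f, hf, h⟩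
    by_cases hcK : Conn (fun S => ρ (S ∪ {e})) E
    · obtain ⟨d₂, q₂, h₂, g₂⟩ := ih _ (by omega) _ E hρe rfl hl'
      rw [nC_conn hne' hcK] at h₂ g₂
      simp only [Finset.union_comm _ {e}, ← Finset.insert_eq, insert_empty_eq] at h₂
      refine ⟨d₂ + 1, ?_⟩
      by_cases hcE : Conn ρ E
      · rw [nC_conn hne' hcE] at h₁ g₁
        obtain rfl : d₁ = d₂ + 1 := by omega
        rw [hdc]
        exact ⟨_, by omega, good_add g₁ g₂⟩
      · have hk : 2 ≤ nC ρ E := by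
          obtain ⟨A, B, hA, hB, rfl, hd, -, -⟩ := not_conn hcE
          rw [nC_union hρ hd]
          have := nC_pos (ρ := ρ) hA
          have := nC_pos (ρ := ρ) hB
          omega
        have hlead := lead_del_le _ ρ E hρ rfl he hne' hc
        rw [lead, g₁.coeff] at hlead
        obtain ⟨j, hj⟩ := Nat.exists_eq_add_of_le' hk
        rw [hj] at g₁ h₁
        obtain rfl : d₂ = j + d₁ := by omega
        -- The deletion contributes nothing to the coefficient of `x`.
        have h0 : (tp ρ E).coeff 1 = 0 := by
          rw [g₁.eq, coeff_X_pow_mul', if_neg (by omega)]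
        rw [hdc, coeff_add, h0, zero_add, g₂.coeff] at hlead
        rw [hdc]
        exact ⟨_, by omega, good_series g₁ g₂ hlead⟩
    · obtain ⟨A, B, hA, hB, rfl, hd, hA', hB'⟩ := not_conn hcK
      have heA : e ∉ A := fun h => he (Finset.mem_union_left _ h)
      have heB : e ∉ B := fun h => he (Finset.mem_union_right _ h)
      have hcA := conn_par hρ heB hd hc
      have hcB := conn_par hρ heA hd.symm (by rwa [Finset.union_comm])
      obtain ⟨c, q, h₂, g₂⟩ := ih (insert e A).card
        (by rw [Finset.card_insert_of_notMem heA]; omega) ρ (insert e A) hρ rfl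
        fun x hx => hl x (Finset.insert_subset_insert e Finset.subset_union_left hx)
      obtain ⟨d, q', h₃, g₃⟩ := ih (insert e B).card
        (by rw [Finset.card_insert_of_notMem heB]; omega) ρ (insert e B) hρ rfl
        fun x hx => hl x (Finset.insert_subset_insert e Finset.subset_union_right hx)
      rw [nC_conn (Finset.insert_nonempty _ _) hcA] at h₂ g₂
      rw [nC_conn (Finset.insert_nonempty _ _) hcB] at h₃ g₃
      refine ⟨c + d, _, ?_, good_par (tp_par hρ hle heA heB hd) g₂ g₃⟩
      have := hd.2
      simp only [Finset.union_comm _ {e}, ← Finset.insert_eq, insert_empty_eq] at this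
      omega

end Main

/-! ### Translation to matroids -/

lemma mr_eq [Finite α] (M : Matroid α) (A : Set α) : (mr M A : ℕ∞) = M.eRk A := by
  obtain ⟨I, hI⟩ := M.exists_isBasis' A
  have h : IsGreatest {n | ∃ I, M.Indep I ∧ I ⊆ A ∧ I.ncard = n} I.ncard := by
    refine ⟨⟨I, hI.indep, hI.subset, rfl⟩, ?_⟩
    rintro _ ⟨J, hJ, hJA, rfl⟩
    have := hJ.encard_le_eRk_of_subset hJA
    rw [← hI.encard_eq_eRk, ← (Set.toFinite J).cast_ncard_eq,
      ← (Set.toFinite I).cast_ncard_eq] at this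
    exact_mod_cast this
  rw [mr, h.csSup_eq, (Set.toFinite I).cast_ncard_eq, hI.encard_eq_eRk]

lemma isRk_mr [Finite α] [DecidableEq α] (M : Matroid α) :
    IsRk (fun A : Finset α => mr M (A : Set α)) where
  mono A B h := by
    have := M.eRk_mono (Finset.coe_subset.2 h)
    rw [← mr_eq, ← mr_eq] at this
    exact_mod_cast this
  submod A B := by
    have := M.eRk_inter_add_eRk_union_le A B
    simp only [← mr_eq] at this
    rw [Finset.coe_union, Finset.coe_inter, add_comm]
    exact_mod_cast this
  unit e A := by
    have := M.eRk_insert_le_add_one e A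
    simp only [← mr_eq] at this
    rw [Finset.coe_insert]
    exact_mod_cast this

lemma mr_empty [Finite α] (M : Matroid α) : mr M ∅ = 0 := by
  have := mr_eq M ∅
  rw [Matroid.eRk_empty] at this
  exact_mod_cast this

lemma mr_le_card [Finite α] (M : Matroid α) (A : Finset α) : mr M (A : Set α) ≤ A.card := by
  have := M.eRk_le_encard A
  rw [← mr_eq, Set.encard_coe_eq_coe_finsetCard] at this
  exact_mod_cast this

lemma mr_single [Finite α] (M : Matroid α) {e : α} (h : ¬ mLoop M e) (he : e ∈ M.E) :
    mr M {e} = 1 := by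
  have h1 : mr M {e} ≤ 1 := by
    have := M.eRk_le_encard {e}
    rw [← mr_eq, Set.encard_singleton] at this
    exact_mod_cast this
  have h2 : mr M {e} ≠ 0 := by
    intro h0
    have := mr_eq M {e}
    rw [h0, Nat.cast_zero, eq_comm, Matroid.eRk_eq_zero_iff (by simpa using he)] at this
    exact h (this rfl)
  omega

lemma bpoly_eq [Fintype α] [DecidableEq α] (M : Matroid α) :
    bpoly M = tp (fun A : Finset α => mr M (A : Set α)) Finset.univ := by
  rw [bpoly, tp, Finset.powerset_univ]
  refine Finset.sum_congr rfl fun A _ => ?_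
  have h := mr_le_card M A
  rw [C_pow, C_neg, C_1, ← tm]
  refine tm_congr (by simp) ?_
  simp only [Finset.coe_empty, mr_empty]
  omega

lemma numComponents_eq [Fintype α] [DecidableEq α] (M : Matroid α) (hE : M.E = Set.univ) :
    numComponents M = nC (fun A : Finset α => mr M (A : Set α)) Finset.univ := by
  have h : ∀ e, {f | crel M e f} =
      (cls (fun A : Finset α => mr M (A : Set α)) Finset.univ e : Set α) := by
    intro e
    ext f
    simp only [crel, hE, Set.mem_univ, true_and, Set.mem_ofPred_eq, Finset.mem_coe, mem_cls,
      Finset.mem_univ, Set.subset_univ, Finset.subset_univ, forall_const, Finset.coe_sdiff,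
      Finset.coe_univ, Finset.coe_empty, mr_empty, add_zero]
    constructor
    · intro h A hA
      simpa using h A hA
    · intro h A hA
      classical
      simpa using h A.toFinset (by simpa using hA)
  rw [numComponents, nC, ← Set.ncard_coe_finset,
    ← Set.ncard_image_of_injective _ Finset.coe_injective]
  congr 1
  ext S
  simp [hE, h, eq_comm]

/-- if `M` is a rank-`r` loopless matroid with `k` connected components
and `r - k ≥ 2`, then for all `2 ≤ i ≤ r-k`,
`b_{i+k-1}(M) ≤ C(r-k-1, i-1)·b_k(M) + C(r-k-1, i-2)`. -/
theorem stmt13 [Fintype α] [DecidableEq α] (M : Matroid α) (hE : M.E = Set.univ)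
    (r k : ℕ) (hr : mr M Set.univ = r) (hk : numComponents M = k)
    (hloop : ∀ e, ¬ mLoop M e) (hrk : k + 2 ≤ r) :
    ∀ i, 2 ≤ i → i ≤ r - k →
      (bpoly M).coeff (i + k - 1) ≤
        ch ((r : ℤ) - k - 1) ((i : ℤ) - 1) * (bpoly M).coeff k +
          ch ((r : ℤ) - k - 1) ((i : ℤ) - 2) := by
  subst hr hk
  intro i hi hi'
  obtain ⟨d, q, h, g⟩ := good_tp _ (fun A : Finset α => mr M (A : Set α)) Finset.univ (isRk_mr M)
    rfl fun e _ => by simp [mr_empty, mr_single M (hloop e) (by simp [hE])]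
  rw [← numComponents_eq M hE, ← bpoly_eq] at g
  rw [← numComponents_eq M hE] at h
  simp only [Finset.coe_empty, mr_empty, Finset.coe_univ, add_zero] at h
  rw [← h] at hi' hrk ⊢
  rw [g.coeff]
  obtain ⟨m, rfl⟩ : ∃ m, d = m + 2 := ⟨d - 2, by omega⟩
  obtain ⟨i, rfl⟩ : ∃ j, i = j + 2 := ⟨i - 2, by omega⟩
  generalize numComponents M = k at *
  have h1 : (bpoly M).coeff (i + 2 + k - 1) = q.coeff (i + 1) := by
    rw [g.eq, coeff_X_pow_mul', if_pos (by omega)]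
    congr 1
    omega
  have h2 : extr (q.coeff 0) (m + 2) = X * (1 + X) ^ (m + 1) + C (q.coeff 0) * (1 + X) ^ (m + 1) := by
    simp only [extr, C_sub, C_1, show m + 2 - 1 = m + 1 by omega]
    ring
  have h3 := g.le (i + 1)
  rw [h2, coeff_add, coeff_X_mul, coeff_C_mul, coeff_one_add_X_pow, coeff_one_add_X_pow] at h3
  have c1 : ch (((k + (m + 2) : ℕ) : ℤ) - k - 1) (((i + 2 : ℕ) : ℤ) - 1) =
      ((m + 1).choose (i + 1) : ℤ) := by
    rw [show ((k + (m + 2) : ℕ) : ℤ) - k - 1 = ((m + 1 : ℕ) : ℤ) by push_cast; ring,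
      show ((i + 2 : ℕ) : ℤ) - 1 = ((i + 1 : ℕ) : ℤ) by push_cast; ring, ch, if_pos (by omega),
      Int.toNat_natCast, Int.toNat_natCast]
  have c2 : ch (((k + (m + 2) : ℕ) : ℤ) - k - 1) (((i + 2 : ℕ) : ℤ) - 2) =
      ((m + 1).choose i : ℤ) := by
    rw [show ((k + (m + 2) : ℕ) : ℤ) - k - 1 = ((m + 1 : ℕ) : ℤ) by push_cast; ring,
      show ((i + 2 : ℕ) : ℤ) - 2 = (i : ℤ) by push_cast; ring, ch, if_pos (by omega),
      Int.toNat_natCast, Int.toNat_natCast]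
  rw [h1, c1, c2]
  linarith
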